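/- arXiv:1502.01840 — 2 statements merged into one kernel-verified Lean document; each statement's English description precedes it below -/
import Mathlib

section
/- (Maximum principle for the norm optimal control problem.) Let τ > 0 with ||T_τψ|| > r, and let f̂ be a norm optimal control for (NP)^τ, i.e. f̂ minimizes ||f||_{L^∞((0,τ);U)} subject to z(τ;ψ,f) ∈ B(0,r). Then there exists η ∈ X, η ≠ 0, such that for almost every t ∈ (0,τ), ⟨f̂(t), B*T*_{τ-t}η⟩_U = max{⟨v, B*T*_{τ-t}η⟩ : ||v||_U ≤ N*(τ)}, where N*(τ) is the optimal norm, and η = -z(τ;ψ,f̂). -/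
open MeasureTheory Filter
open scoped RealInnerProductSpace

/-- The state trajectory `z(t;ψ,f) = T_t ψ + ∫_0^t T_{t-σ} B f(σ) dσ`. -/
noncomputable def traj {X U : Type*} [NormedAddCommGroup X] [NormedSpace ℝ X] [CompleteSpace X]
    [NormedAddCommGroup U] [NormedSpace ℝ U]
    (T : ℝ → X →L[ℝ] X) (B : U →L[ℝ] X) (ψ : X) (u : ℝ → U) (t : ℝ) : X :=
  T t ψ + ∫ σ in Set.Ioc 0 t, T (t - σ) (B (u σ))

lemma aux_bound {X : Type*} [NormedAddCommGroup X] [InnerProductSpace ℝ X] [CompleteSpace X]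
    (T : ℝ → X →L[ℝ] X) (hTcont : ∀ x : X, Continuous fun t => T t x) (τ : ℝ) :
    ∃ M : ℝ, 0 ≤ M ∧ ∀ t ∈ Set.Icc 0 τ, ‖T t‖ ≤ M := by
  obtain ⟨C, hC⟩ := banach_steinhaus (g := fun t : Set.Icc (0 : ℝ) τ => T t) (fun x => by
    obtain ⟨C, hC⟩ := (isCompact_Icc (a := (0 : ℝ)) (b := τ)).exists_bound_of_continuousOn
      (hTcont x).continuousOn
    exact ⟨C, fun i => hC i i.2⟩)
  exact ⟨max C 0, le_max_right _ _, fun t ht => (hC ⟨t, ht⟩).trans (le_max_left _ _)⟩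

lemma aux_meas {X U : Type*} [NormedAddCommGroup X] [InnerProductSpace ℝ X] [CompleteSpace X]
    [NormedAddCommGroup U] [InnerProductSpace ℝ U]
    (T : ℝ → X →L[ℝ] X) (B : U →L[ℝ] X) (hTcont : ∀ x : X, Continuous fun t => T t x) (τ : ℝ)
    (μ : Measure ℝ) (g : ℝ → U) (hg : AEStronglyMeasurable g μ) :
    AEStronglyMeasurable (fun t => T (τ - t) (B (g t))) μ := by
  obtain ⟨g', hg', hgg⟩ := hg
  refine ⟨fun t => T (τ - t) (B (g' t)), ?_, ?_⟩
  · have h := stronglyMeasurable_uncurry_of_continuous_of_stronglyMeasurable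
      (u := fun (t : ℝ) (s : ℝ) => T t (B (g' s)))
      (fun x => hTcont _)
      (fun i => ((T i).comp B).continuous.comp_stronglyMeasurable hg')
    exact h.comp_measurable (g := fun t : ℝ => (τ - t, t)) (by fun_prop)
  · filter_upwards [hgg] with t ht
    rw [ht]

lemma aux_int {X U : Type*} [NormedAddCommGroup X] [InnerProductSpace ℝ X] [CompleteSpace X]
    [NormedAddCommGroup U] [InnerProductSpace ℝ U]
    (T : ℝ → X →L[ℝ] X) (B : U →L[ℝ] X) (hTcont : ∀ x : X, Continuous fun t => T t x) (τ : ℝ)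
    (g : ℝ → U) (C : ℝ) (hg : AEStronglyMeasurable g (volume.restrict (Set.Ioc 0 τ)))
    (hb : ∀ᵐ t ∂volume.restrict (Set.Ioc 0 τ), ‖g t‖ ≤ C) :
    Integrable (fun t => T (τ - t) (B (g t))) (volume.restrict (Set.Ioc 0 τ)) := by
  obtain ⟨M, hM0, hM⟩ := aux_bound T hTcont τ
  refine Integrable.of_bound (aux_meas T B hTcont τ _ g hg) (M * (‖B‖ * C)) ?_
  filter_upwards [hb, ae_restrict_mem measurableSet_Ioc] with t ht htm
  refine ((T (τ - t)).le_opNorm _).trans ?_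
  refine mul_le_mul (hM _ ⟨by linarith [htm.2], by linarith [htm.1]⟩) ?_ (norm_nonneg _) hM0
  exact (B.le_opNorm _).trans (by gcongr)

lemma aux_inner {X : Type*} [NormedAddCommGroup X] [InnerProductSpace ℝ X] (z d : X)
    (h : ∀ l : ℝ, 0 < l → l ≤ 1 → ‖z‖ ≤ ‖z + l • d‖) : 0 ≤ ⟪z, d⟫ := by
  by_contra! hc
  have key : ∀ l : ℝ, 0 < l → l ≤ 1 → 0 ≤ 2 * ⟪z, d⟫ + l * ‖d‖ ^ 2 := by
    intro l hl hl1
    have h1 := pow_le_pow_left₀ (norm_nonneg _) (h l hl hl1) 2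
    rw [norm_add_sq_real, inner_smul_right, norm_smul, Real.norm_eq_abs, abs_of_pos hl] at h1
    have : 0 ≤ l * (2 * ⟪z, d⟫ + l * ‖d‖ ^ 2) := by nlinarith
    exact nonneg_of_mul_nonneg_right this hl
  have hlim : Tendsto (fun l : ℝ => 2 * ⟪z, d⟫ + l * ‖d‖ ^ 2) (nhdsWithin 0 (Set.Ioi 0))
      (nhds (2 * ⟪z, d⟫ + 0 * ‖d‖ ^ 2)) :=
    (Continuous.tendsto (by fun_prop) 0).mono_left nhdsWithin_le_nhds
  have h0 := ge_of_tendsto hlim (by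
    filter_upwards [Ioc_mem_nhdsGT (zero_lt_one (α := ℝ))] with l hl
    exact key l hl.1 hl.2)
  linarith

/-- (Maximum principle for the norm optimal control problem.) Let `τ > 0`
with `‖T_τ ψ‖ > r` and let `f̂` be a norm optimal control for `(NP)^τ`, with optimal norm
`N*(τ)`. Then there exists `η ≠ 0` such that for a.e. `t ∈ (0,τ)`,
`⟨f̂(t), B* T*_{τ-t} η⟩ = max {⟨v, B* T*_{τ-t} η⟩ : ‖v‖ ≤ N*(τ)}`, and `η = -z(τ;ψ,f̂)`. -/
theorem stmt8 {X U : Type*} [NormedAddCommGroup X] [InnerProductSpace ℝ X] [CompleteSpace X]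
    [NormedAddCommGroup U] [InnerProductSpace ℝ U] [CompleteSpace U]
    (T : ℝ → X →L[ℝ] X) (B : U →L[ℝ] X)
    (hT0 : T 0 = 1)
    (hTadd : ∀ s t : ℝ, 0 ≤ s → 0 ≤ t → T (s + t) = (T s).comp (T t))
    (hTcont : ∀ x : X, Continuous fun t => T t x)
    (r : ℝ) (hr : 0 < r) (ψ : X)
    (τ : ℝ) (hτ : 0 < τ) (hTψ : r < ‖T τ ψ‖)
    -- `f̂` is a norm optimal control for `(NP)^τ`, with optimal norm `N*(τ) = N`
    (f : ℝ → U) (N : ℝ) (hN : 0 ≤ N)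
    (hf_meas : AEStronglyMeasurable f (volume.restrict (Set.Ioo 0 τ)))
    (hf_bound : ∀ᵐ t ∂volume.restrict (Set.Ioo 0 τ), ‖f t‖ ≤ N)
    (hf_target : traj T B ψ f τ ∈ Metric.closedBall (0 : X) r)
    (hf_opt : ∀ g : ℝ → U, ∀ C : ℝ, 0 ≤ C →
      AEStronglyMeasurable g (volume.restrict (Set.Ioo 0 τ)) →
      (∀ᵐ t ∂volume.restrict (Set.Ioo 0 τ), ‖g t‖ ≤ C) →
      traj T B ψ g τ ∈ Metric.closedBall (0 : X) r → N ≤ C) :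
    ∃ η : X, η ≠ 0 ∧ η = -traj T B ψ f τ ∧
      ∀ᵐ t ∂volume.restrict (Set.Ioo 0 τ),
        IsGreatest ((fun v : U => ⟪v, B.adjoint ((T (τ - t)).adjoint η)⟫) ''
            Metric.closedBall (0 : U) N)
          ⟪f t, B.adjoint ((T (τ - t)).adjoint η)⟫ := by
  have hI : volume.restrict (Set.Ioo 0 τ) = volume.restrict (Set.Ioc 0 τ) :=
    Measure.restrict_congr_set Ioo_ae_eq_Ioc
  rw [hI] at hf_meas hf_bound hf_opt ⊢
  set μ := volume.restrict (Set.Ioc 0 τ) with hμ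
  have hInteg : ∀ (g : ℝ → U) (C : ℝ), AEStronglyMeasurable g μ → (∀ᵐ t ∂μ, ‖g t‖ ≤ C) →
      Integrable (fun t => T (τ - t) (B (g t))) μ := fun g C h1 h2 =>
    aux_int T B hTcont τ g C h1 h2
  have htr : ∀ g, traj T B ψ g τ = T τ ψ + ∫ t, T (τ - t) (B (g t)) ∂μ := fun g => rfl
  simp only [mem_closedBall_zero_iff] at hf_target hf_opt
  have hNpos : 0 < N := by
    rcases hN.lt_or_eq with h | h
    · exact h
    exfalso
    have : ∫ t, T (τ - t) (B (f t)) ∂μ = 0 := by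
      refine integral_eq_zero_of_ae ?_
      filter_upwards [hf_bound] with t ht
      have : f t = 0 := norm_le_zero_iff.1 (h ▸ ht)
      simp [this]
    rw [htr, this, add_zero] at hf_target
    linarith
  have hA : ∀ g : ℝ → U, AEStronglyMeasurable g μ → (∀ᵐ t ∂μ, ‖g t‖ ≤ N) →
      r ≤ ‖traj T B ψ g τ‖ := by
    intro g hg hgb
    by_contra! hlt
    have hlim : Tendsto (fun m : ℝ => ‖T τ ψ + m • ∫ t, T (τ - t) (B (g t)) ∂μ‖)
        (nhdsWithin 1 (Set.Iio 1)) (nhds ‖T τ ψ + (1 : ℝ) • ∫ t, T (τ - t) (B (g t)) ∂μ‖) :=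
      (Continuous.tendsto (by fun_prop) 1).mono_left nhdsWithin_le_nhds
    rw [one_smul, ← htr] at hlim
    obtain ⟨m, hm, hm0, hm1⟩ := ((hlim.eventually_lt_const hlt).and
      (Ioo_mem_nhdsLT (zero_lt_one (α := ℝ)))).exists
    have := hf_opt (fun t => m • g t) (m * N) (by positivity) (hg.const_smul m) (by
      filter_upwards [hgb] with t ht
      rw [norm_smul, Real.norm_eq_abs, abs_of_pos hm0]
      gcongr) (by
      rw [htr]
      simp only [map_smul, integral_smul]
      exact hm.le)
    nlinarith
  set z := traj T B ψ f τ with hz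
  have hzr : r ≤ ‖z‖ := hA f hf_meas hf_bound
  have hB : ∀ d : ℝ → U, AEStronglyMeasurable d μ → (∀ᵐ t ∂μ, ‖f t + d t‖ ≤ N) →
      0 ≤ ⟪z, ∫ t, T (τ - t) (B (d t)) ∂μ⟫ := by
    intro d hd hdb
    have hdi : Integrable (fun t => T (τ - t) (B (d t))) μ := by
      refine hInteg d (N + N) hd ?_
      filter_upwards [hdb, hf_bound] with t h1 h2
      calc ‖d t‖ = ‖(f t + d t) - f t‖ := by congr 1; abel
        _ ≤ _ := (norm_sub_le _ _).trans (add_le_add h1 h2)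
    refine aux_inner _ _ fun l hl hl1 => (hf_target.trans (hA (fun t => f t + l • d t)
      (hf_meas.add (hd.const_smul l)) ?_)).trans_eq ?_
    · filter_upwards [hdb, hf_bound] with t h1 h2
      have : f t + l • d t = (1 - l) • f t + l • (f t + d t) := by module
      rw [this]
      refine (norm_add_le _ _).trans ?_
      rw [norm_smul, norm_smul, Real.norm_eq_abs, Real.norm_eq_abs, abs_of_pos hl,
        abs_of_nonneg (by linarith)]
      nlinarith
    · rw [htr, hz, htr]
      simp only [map_add, map_smul]
      rw [integral_add (hInteg f N hf_meas hf_bound) (hdi.fun_smul l), integral_smul, add_assoc]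
  have hC : ∀ v : U, ‖v‖ ≤ N → ∀ᵐ t ∂μ, 0 ≤ ⟪z, T (τ - t) (B (v - f t))⟫ := by
    intro v hv
    have hvi : Integrable (fun t => T (τ - t) (B (v - f t))) μ := by
      refine hInteg (fun t => v - f t) (N + N) (aestronglyMeasurable_const.sub hf_meas) ?_
      filter_upwards [hf_bound] with t h2
      exact (norm_sub_le _ _).trans (add_le_add hv h2)
    refine ae_nonneg_of_forall_setIntegral_nonneg (hvi.const_inner z) ?_
    intro s hs _
    rw [integral_inner hvi.integrableOn, ← integral_indicator hs]
    have h := hB (s.indicator fun t => v - f t)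
      ((aestronglyMeasurable_const.sub hf_meas).indicator hs) (by
        filter_upwards [hf_bound] with t h2
        by_cases hts : t ∈ s <;> simp [hts, hv, h2])
    convert h using 3
    ext t
    by_cases hts : t ∈ s <;> simp [hts]
  refine ⟨-z, ?_, rfl, ?_⟩
  · intro h
    rw [neg_eq_zero] at h
    rw [h, norm_zero] at hzr
    linarith
  set p : ℝ → U := fun t => B.adjoint ((T (τ - t)).adjoint (-z)) with hp
  have hpin : ∀ t v, ⟪v, p t⟫ = -⟪z, T (τ - t) (B v)⟫ := by
    intro t v
    simp only [hp]
    rw [ContinuousLinearMap.adjoint_inner_right, ContinuousLinearMap.adjoint_inner_right,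
      inner_neg_right, real_inner_comm]
  set V : Submodule ℝ U := (Submodule.span ℝ (Set.range fun q : ℚ => p q)).topologicalClosure
    with hV
  have hVc : IsClosed (V : Set U) := Submodule.isClosed_topologicalClosure _
  have : CompleteSpace V := hVc.completeSpace_coe
  have hpV : ∀ t, p t ∈ V := by
    intro t
    rw [← Submodule.orthogonal_orthogonal V, Submodule.mem_orthogonal]
    intro w hw
    have hcont : Continuous fun t => ⟪w, p t⟫ := by
      simp only [hpin]
      exact (continuous_const.inner ((hTcont (B w)).comp (continuous_const.sub continuous_id))).neg
    have : (fun t => ⟪w, p t⟫) = fun _ => 0 := by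
      refine Rat.isDenseEmbedding_coe_real.dense.equalizer hcont continuous_const ?_
      ext q
      refine Submodule.inner_left_of_mem_orthogonal (K := V) ?_ hw
      exact Submodule.le_topologicalClosure _ (Submodule.subset_span ⟨q, rfl⟩)
    exact congrFun this t
  have hsep : TopologicalSpace.IsSeparable ((V : Set U) ∩ Metric.closedBall 0 N) := by
    refine TopologicalSpace.IsSeparable.mono ?_ Set.inter_subset_left
    rw [hV, Submodule.topologicalClosure_coe]
    exact ((Set.countable_range _).isSeparable.span (R := ℝ)).closure
  obtain ⟨D, hDs, hDc, hDd⟩ := hsep.exists_countable_dense_subset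
  have hae : ∀ᵐ t ∂μ, ∀ v ∈ D, 0 ≤ ⟪z, T (τ - t) (B (v - f t))⟫ :=
    (ae_ball_iff hDc).2 fun v hv => hC v (mem_closedBall_zero_iff.1 (hDs hv).2)
  filter_upwards [hae, hf_bound] with t ht htb
  refine ⟨⟨f t, mem_closedBall_zero_iff.2 htb, rfl⟩, ?_⟩
  rintro _ ⟨v, hv, rfl⟩
  change ⟪v, p t⟫ ≤ ⟪f t, p t⟫
  have h1 : ∀ w ∈ closure D, ⟪w, p t⟫ ≤ ⟪f t, p t⟫ := by
    have hcl : IsClosed {w : U | ⟪w, p t⟫ ≤ ⟪f t, p t⟫} :=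
      isClosed_le (by fun_prop) continuous_const
    refine hcl.closure_subset_iff.2 fun w hw => ?_
    have := ht w hw
    rw [map_sub, map_sub, inner_sub_right] at this
    simp only [Set.mem_ofPred_eq, hpin]
    linarith
  have h2 : ⟪v, p t⟫ = ⟪V.starProjection v, p t⟫ := by
    rw [Submodule.inner_starProjection_left_eq_right,
      Submodule.starProjection_eq_self_iff.2 (hpV t)]
  rw [h2]
  refine h1 _ (hDd ⟨Submodule.starProjection_apply_mem _ _, ?_⟩)
  rw [mem_closedBall_zero_iff] at hv ⊢
  exact (Submodule.norm_starProjection_apply_le _ _).trans hv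
end

section
/- (Duality of minimal time and minimal norm.) Under the same assumptions, the minimal norm function N* restricted to (0,τ̂) and the minimal time function τ* are inverse to each other: N*(τ*(M)) = M for every M > 0, and τ*(N*(τ)) = τ for every τ ∈ (0,τ̂). -/
open MeasureTheory Filter

section aux

set_option linter.unusedSectionVars false

/-- globally measurable controls bounded by `C` a.e. -/
def GoodCtrl {U : Type*} [NormedAddCommGroup U] (C : ℝ) (w : ℝ → U) : Prop :=
  AEStronglyMeasurable w volume ∧ ∀ᵐ s, ‖w s‖ ≤ C

variable {X U : Type*} [NormedAddCommGroup X] [InnerProductSpace ℝ X] [CompleteSpace X]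
    [NormedAddCommGroup U] [InnerProductSpace ℝ U] [CompleteSpace U]

theorem aux_joint (T : ℝ → X →L[ℝ] X) 
    (hTcont : ∀ x : X, Continuous fun t => T t x)
    (hTcontr : ∀ t : ℝ, 0 ≤ t → ‖T t‖ ≤ 1) :
    Continuous (fun p : ℝ × X => T (max p.1 0) p.2) := by
  refine continuous_prod_of_continuous_lipschitzWith' _ 1 ?_ ?_
  · intro t
    refine LipschitzWith.of_dist_le_mul fun x y => ?_
    rw [dist_eq_norm, dist_eq_norm, ← map_sub]
    exact (T (max t 0)).le_of_opNorm_le (hTcontr _ (le_max_right _ _)) _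
  · intro x
    exact (hTcont x).comp (by fun_prop)

theorem aux_bound_s16 (T : ℝ → X →L[ℝ] X) (B : U →L[ℝ] X)
    (hTcontr : ∀ t : ℝ, 0 ≤ t → ‖T t‖ ≤ 1) {C : ℝ} {t : ℝ} {x : U} (hx : ‖x‖ ≤ C) :
    ‖T (max t 0) (B x)‖ ≤ ‖B‖ * C := by
  have h1 := (T (max t 0)).le_of_opNorm_le (hTcontr _ (le_max_right _ _)) (B x)
  have h2 := B.le_opNorm x
  have h3 : ‖B‖ * ‖x‖ ≤ ‖B‖ * C := by gcongr
  linarith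

theorem aux_meas_s16 (T : ℝ → X →L[ℝ] X) (B : U →L[ℝ] X)
    (hTcont : ∀ x : X, Continuous fun t => T t x)
    (hTcontr : ∀ t : ℝ, 0 ≤ t → ‖T t‖ ≤ 1) {C : ℝ} {w : ℝ → U} (hw : GoodCtrl C w) (t : ℝ) :
    AEStronglyMeasurable (fun σ => T (max (t - σ) 0) (B (w σ))) volume := by
  have h1 : AEStronglyMeasurable (fun σ : ℝ => ((t - σ, B (w σ)) : ℝ × X)) volume :=
    (Continuous.aestronglyMeasurable (by fun_prop)).prodMk
      (B.continuous.comp_aestronglyMeasurable hw.1)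
  exact (aux_joint T hTcont hTcontr).comp_aestronglyMeasurable h1

theorem aux_int_s16 (T : ℝ → X →L[ℝ] X) (B : U →L[ℝ] X)
    (hTcont : ∀ x : X, Continuous fun t => T t x)
    (hTcontr : ∀ t : ℝ, 0 ≤ t → ‖T t‖ ≤ 1) {C : ℝ} {w : ℝ → U} (hw : GoodCtrl C w) (t a b : ℝ) :
    IntegrableOn (fun σ => T (max (t - σ) 0) (B (w σ))) (Set.Ioc a b) volume := by
  refine IntegrableOn.of_bound (by simp) (aux_meas_s16 T B hTcont hTcontr hw t).restrict (‖B‖ * C) ?_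
  refine ae_restrict_of_ae ?_
  filter_upwards [hw.2] with s hs
  exact aux_bound_s16 T B hTcontr hs

theorem aux_traj (T : ℝ → X →L[ℝ] X) (B : U →L[ℝ] X) (ψ : X) (w : ℝ → U) (t : ℝ) :
    traj T B ψ w t = T t ψ + ∫ σ in Set.Ioc 0 t, T (max (t - σ) 0) (B (w σ)) := by
  unfold traj
  congr 1
  refine setIntegral_congr_fun measurableSet_Ioc fun σ hσ => ?_
  rw [max_eq_left (by linarith [hσ.2])]

/-- replacing a control by an a.e. equal one does not change the trajectory -/
theorem aux_traj_congr (T : ℝ → X →L[ℝ] X) (B : U →L[ℝ] X) (ψ : X) {v w : ℝ → U} {t : ℝ}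
    (h : ∀ s ∈ Set.Ioo 0 t, v s = w s) :
    traj T B ψ v t = traj T B ψ w t := by
  unfold traj
  congr 1
  rw [integral_Ioc_eq_integral_Ioo, integral_Ioc_eq_integral_Ioo]
  refine setIntegral_congr_fun measurableSet_Ioo fun σ hσ => ?_
  simp only [h σ hσ]

theorem aux_traj_comb (T : ℝ → X →L[ℝ] X) (B : U →L[ℝ] X)
    (hTcont : ∀ x : X, Continuous fun t => T t x)
    (hTcontr : ∀ t : ℝ, 0 ≤ t → ‖T t‖ ≤ 1) (ψ : X) {C D : ℝ} {v w : ℝ → U}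
    (hv : GoodCtrl C v) (hw : GoodCtrl D w) (t l : ℝ) :
    traj T B ψ (fun s => (1 - l) • v s + l • w s) t =
      (1 - l) • traj T B ψ v t + l • traj T B ψ w t := by
  rw [aux_traj, aux_traj, aux_traj]
  simp only [map_add, map_smul]
  rw [integral_add ((aux_int_s16 T B hTcont hTcontr hv t 0 t).fun_smul (1 - l))
    ((aux_int_s16 T B hTcont hTcontr hw t 0 t).fun_smul l), integral_smul, integral_smul]
  module

theorem aux_traj_tendsto (T : ℝ → X →L[ℝ] X) (B : U →L[ℝ] X)
    (hTcont : ∀ x : X, Continuous fun t => T t x)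
    (hTcontr : ∀ t : ℝ, 0 ≤ t → ‖T t‖ ≤ 1) (ψ : X) {C : ℝ} {w : ℝ → U}
    (hw : GoodCtrl C w) (t : ℝ) :
    Tendsto (fun s => traj T B ψ w s) (nhdsWithin t (Set.Iio t)) (nhds (traj T B ψ w t)) := by
  simp only [aux_traj]
  refine Tendsto.add ((hTcont ψ).continuousAt.tendsto.mono_left nhdsWithin_le_nhds) ?_
  simp only [← integral_indicator measurableSet_Ioc]
  refine tendsto_integral_filter_of_dominated_convergence
    ((Set.Ioc 0 t).indicator fun _ => ‖B‖ * C) ?_ ?_ ?_ ?_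
  · exact Eventually.of_forall fun s =>
      (aux_meas_s16 T B hTcont hTcontr hw s).indicator measurableSet_Ioc
  · filter_upwards [self_mem_nhdsWithin] with s hs
    filter_upwards [hw.2] with σ hσ
    have hs' : s < t := hs
    by_cases h : σ ∈ Set.Ioc 0 s
    · have h' : σ ∈ Set.Ioc 0 t := ⟨h.1, h.2.trans hs'.le⟩
      rw [Set.indicator_of_mem h, Set.indicator_of_mem h']
      exact aux_bound_s16 T B hTcontr hσ
    · rw [Set.indicator_of_notMem h, norm_zero]
      refine Set.indicator_nonneg (fun _ _ => ?_) _
      have := (norm_nonneg _).trans hσ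
      positivity
  · rw [integrable_indicator_iff measurableSet_Ioc]
    exact integrableOn_const (by simp)
  · have hne : ∀ᵐ σ : ℝ, σ ≠ t := by simp [ae_iff, measure_singleton]
    filter_upwards [hne] with σ hσ
    by_cases h : σ ∈ Set.Ioc 0 t
    · have hlt : σ < t := lt_of_le_of_ne h.2 hσ
      rw [Set.indicator_of_mem h]
      have hc : Continuous (fun s : ℝ => T (max (s - σ) 0) (B (w σ))) :=
        (hTcont (B (w σ))).comp (by fun_prop)
      refine (hc.continuousAt.tendsto.mono_left nhdsWithin_le_nhds).congr' ?_
      have : ∀ᶠ s in nhdsWithin t (Set.Iio t), σ < s :=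
        nhdsWithin_le_nhds (lt_mem_nhds hlt)
      filter_upwards [this] with s hs
      rw [Set.indicator_of_mem (show σ ∈ Set.Ioc 0 s from ⟨h.1, hs.le⟩)]
    · rw [Set.indicator_of_notMem h]
      refine tendsto_const_nhds.congr' ?_
      filter_upwards [self_mem_nhdsWithin] with s hs
      have hs' : s < t := hs
      rw [Set.indicator_of_notMem]
      intro h2
      exact h ⟨h2.1, h2.2.trans hs'.le⟩

/-- strong continuity of the adjoint semigroup -/
theorem aux_adj_cont (T : ℝ → X →L[ℝ] X) (hT0 : T 0 = 1)
    (hTadd : ∀ s t : ℝ, 0 ≤ s → 0 ≤ t → T (s + t) = (T s).comp (T t))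
    (hTcont : ∀ x : X, Continuous fun t => T t x)
    (hTcontr : ∀ t : ℝ, 0 ≤ t → ‖T t‖ ≤ 1) (η : X) :
    Continuous (fun t : ℝ => (T (max t 0)).adjoint η) := by
  have hadjc : ∀ t : ℝ, 0 ≤ t → ∀ x, ‖(T t).adjoint x‖ ≤ ‖x‖ := by
    intro t ht x
    have := (T t).adjoint.le_of_opNorm_le (c := 1) (by
      rw [LinearIsometryEquiv.norm_map]; exact hTcontr t ht) x
    simpa using this
  have key : ∀ s t : ℝ, 0 ≤ s → s ≤ t → ‖(T t).adjoint η - (T s).adjoint η‖ ^ 2 ≤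
      2 * ‖η‖ ^ 2 - 2 * inner ℝ η (T (t - s) η) := by
    intro s t hs hst
    have h1 : T t = (T (t - s)).comp (T s) := by
      rw [← hTadd _ _ (by linarith) hs]; congr 1; ring
    have h2 : (T t).adjoint η - (T s).adjoint η = (T s).adjoint ((T (t - s)).adjoint η - η) := by
      rw [h1, ContinuousLinearMap.adjoint_comp, map_sub]; rfl
    rw [h2]
    have h3 := hadjc s hs ((T (t - s)).adjoint η - η)
    have h4 := hadjc (t - s) (by linarith) η
    have h5 := norm_sub_sq_real ((T (t - s)).adjoint η) η
    rw [ContinuousLinearMap.adjoint_inner_left] at h5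
    have h6 : ‖(T (t - s)).adjoint η‖ ^ 2 ≤ ‖η‖ ^ 2 := by gcongr
    have h7 : ‖(T s).adjoint ((T (t - s)).adjoint η - η)‖ ^ 2 ≤
      ‖(T (t - s)).adjoint η - η‖ ^ 2 := by gcongr
    linarith
  have key2 : ∀ s t : ℝ, ‖(T (max t 0)).adjoint η - (T (max s 0)).adjoint η‖ ^ 2 ≤
      2 * ‖η‖ ^ 2 - 2 * inner ℝ η (T |max t 0 - max s 0| η) := by
    intro s t
    rcases le_total (max s 0) (max t 0) with h | h
    · rw [abs_of_nonneg (by linarith)]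
      exact key _ _ (le_max_right _ _) h
    · rw [abs_of_nonpos (by linarith), norm_sub_rev, neg_sub]
      exact key _ _ (le_max_right _ _) h
  rw [continuous_iff_continuousAt]
  intro s
  rw [ContinuousAt, tendsto_iff_norm_sub_tendsto_zero]
  have hc : Continuous (fun t : ℝ => 2 * ‖η‖ ^ 2 - 2 * inner ℝ η (T |max t 0 - max s 0| η)) := by
    have : Continuous (fun t : ℝ => T |max t 0 - max s 0| η) := (hTcont η).comp (by fun_prop)
    fun_prop
  have h0 := hc.tendsto s
  simp only [sub_self, abs_zero, hT0, one_apply_eq_self,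
    real_inner_self_eq_norm_sq] at h0
  have h1 := squeeze_zero (fun t => sq_nonneg _) (key2 s) h0
  have h2 := h1.sqrt
  simpa [Real.sqrt_sq (norm_nonneg _)] using h2

/-- approximate null controllability from observability, with controls supported in `(a,b]` -/
theorem aux_control (T : ℝ → X →L[ℝ] X) (B : U →L[ℝ] X) (hT0 : T 0 = 1)
    (hTadd : ∀ s t : ℝ, 0 ≤ s → 0 ≤ t → T (s + t) = (T s).comp (T t))
    (hTcont : ∀ x : X, Continuous fun t => T t x)
    (hTcontr : ∀ t : ℝ, 0 ≤ t → ‖T t‖ ≤ 1)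
    (K : ℝ → ℝ) (hK_pos : ∀ τ : ℝ, 0 < τ → 0 < K τ)
    (hobs : ∀ τ : ℝ, 0 < τ → ∀ η : X,
      ‖(T τ).adjoint η‖ ≤ K τ * ∫ t in Set.Ioc 0 τ, ‖B.adjoint ((T t).adjoint η)‖)
    (r : ℝ) (hr : 0 < r) (ψ : X) (a b : ℝ) (ha : 0 ≤ a) (hab : a < b) :
    ∃ C : ℝ, 0 ≤ C ∧ ∃ g : ℝ → U, GoodCtrl C g ∧ (∀ s, s ∉ Set.Ioc a b → g s = 0) ∧
      ‖traj T B ψ g b‖ ≤ r / 2 := by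
  have hKp := hK_pos (b - a) (by linarith)
  set C := K (b - a) * ‖ψ‖ with hC
  have hC0 : 0 ≤ C := by positivity
  let Φ : (ℝ → U) → X := fun w => ∫ σ in Set.Ioc 0 b, T (max (b - σ) 0) (B (w σ))
  let R : Set X := {x | ∃ g : ℝ → U, GoodCtrl C g ∧ (∀ s, s ∉ Set.Ioc a b → g s = 0) ∧ Φ g = x}
  have hconv : Convex ℝ R := by
    rintro x ⟨g, hg, hg0, rfl⟩ y ⟨h, hh, hh0, rfl⟩ α β hα hβ hαβ
    refine ⟨fun s => α • g s + β • h s, ⟨?_, ?_⟩, ?_, ?_⟩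
    · exact (hg.1.const_smul α).add (hh.1.const_smul β)
    · filter_upwards [hg.2, hh.2] with s h1 h2
      calc ‖α • g s + β • h s‖ ≤ ‖α • g s‖ + ‖β • h s‖ := norm_add_le _ _
        _ = α * ‖g s‖ + β * ‖h s‖ := by
          rw [norm_smul, norm_smul, Real.norm_of_nonneg hα, Real.norm_of_nonneg hβ]
        _ ≤ α * C + β * C := by gcongr
        _ = C := by rw [← add_mul, hαβ, one_mul]
    · intro s hs
      simp [hg0 s hs, hh0 s hs]
    · simp only [Φ, map_add, map_smul]
      rw [integral_add ((aux_int_s16 T B hTcont hTcontr hg b 0 b).fun_smul α)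
        ((aux_int_s16 T B hTcont hTcontr hh b 0 b).fun_smul β), integral_smul, integral_smul]
  have hmem : -(T b ψ) ∈ closure R := by
    by_contra hnot
    obtain ⟨f, u, hf1, hf2⟩ := geometric_hahn_banach_closed_point hconv.closure
      isClosed_closure hnot
    obtain ⟨η, rfl⟩ := (InnerProductSpace.toDual ℝ X).surjective f
    simp only [InnerProductSpace.toDual_apply_apply] at hf1 hf2
    let v : ℝ → U := fun σ => B.adjoint ((T (max (b - σ) 0)).adjoint η)
    have hvc : Continuous v := by
      have := (aux_adj_cont T hT0 hTadd hTcont hTcontr η).comp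
        (continuous_const.sub continuous_id : Continuous fun σ : ℝ => b - σ)
      exact B.adjoint.continuous.comp this
    let g : ℝ → U := (Set.Ioc a b).indicator fun σ => C • (‖v σ‖⁻¹ • v σ)
    have hg : GoodCtrl C g := by
      constructor
      · refine AEStronglyMeasurable.indicator ?_ measurableSet_Ioc
        refine AEStronglyMeasurable.const_smul ?_ C
        exact (hvc.norm.measurable.inv.aestronglyMeasurable).smul hvc.aestronglyMeasurable
      · refine Eventually.of_forall fun s => ?_
        by_cases hs : s ∈ Set.Ioc a b
        · simp only [g, Set.indicator_of_mem hs, norm_smul, norm_inv, norm_norm,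
            Real.norm_of_nonneg hC0]
          exact mul_le_of_le_one_right hC0 (inv_mul_le_one)
        · simp only [g, Set.indicator_of_notMem hs, norm_zero, hC0]
    have hgR : Φ g ∈ R := ⟨g, hg, fun s hs => Set.indicator_of_notMem hs _, rfl⟩
    have h1 := hf1 _ (subset_closure hgR)
    have h2 : inner ℝ η (Φ g) = C * ∫ σ in Set.Ioc a b, ‖v σ‖ := by
      simp only [Φ]
      rw [← integral_inner (aux_int_s16 T B hTcont hTcontr hg b 0 b), ← integral_const_mul]
      have hpt : ∀ σ, inner ℝ η (T (max (b - σ) 0) (B (g σ))) =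
          (Set.Ioc a b).indicator (fun σ => C * ‖v σ‖) σ := by
        intro σ
        rw [← ContinuousLinearMap.adjoint_inner_left, ← ContinuousLinearMap.adjoint_inner_left]
        change inner ℝ (v σ) (g σ) = _
        by_cases hs : σ ∈ Set.Ioc a b
        · simp only [g, Set.indicator_of_mem hs, inner_smul_right, real_inner_self_eq_norm_sq]
          by_cases hv : ‖v σ‖ = 0
          · simp [hv]
          · field_simp
        · simp only [g, Set.indicator_of_notMem hs, inner_zero_right]
      simp only [hpt]
      rw [setIntegral_indicator measurableSet_Ioc, Set.inter_eq_right.2]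
      exact Set.Ioc_subset_Ioc_left ha
    have h3 : ∫ σ in Set.Ioc a b, ‖v σ‖ =
        ∫ t in Set.Ioc 0 (b - a), ‖B.adjoint ((T t).adjoint η)‖ := by
      have e1 : ∫ t in Set.Ioc 0 (b - a), ‖B.adjoint ((T t).adjoint η)‖ =
          ∫ t in Set.Ioc 0 (b - a), ‖B.adjoint ((T (max t 0)).adjoint η)‖ := by
        refine setIntegral_congr_fun measurableSet_Ioc fun σ hσ => ?_
        rw [max_eq_left hσ.1.le]
      rw [e1, ← intervalIntegral.integral_of_le hab.le,
        ← intervalIntegral.integral_of_le (by linarith)]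
      have := intervalIntegral.integral_comp_sub_left (a := a) (b := b)
        (fun t => ‖B.adjoint ((T (max t 0)).adjoint η)‖) b
      rw [sub_self] at this
      exact this
    have h4 := hobs (b - a) (by linarith) η
    have h5 : T b = (T (b - a)).comp (T a) := by
      rw [← hTadd _ _ (by linarith) ha]; congr 1; ring
    have h6 : inner ℝ η (-(T b ψ)) ≤ ‖(T (b - a)).adjoint η‖ * ‖ψ‖ := by
      rw [h5, ContinuousLinearMap.comp_apply, ← map_neg,
        ← ContinuousLinearMap.adjoint_inner_left]
      refine (real_inner_le_norm _ _).trans ?_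
      rw [norm_neg]
      have := (T a).le_of_opNorm_le (hTcontr a ha) ψ
      rw [one_mul] at this
      gcongr
    have h7 : ‖(T (b - a)).adjoint η‖ * ‖ψ‖ ≤
        (K (b - a) * ∫ t in Set.Ioc 0 (b - a), ‖B.adjoint ((T t).adjoint η)‖) * ‖ψ‖ := by
      gcongr
    rw [h2, h3] at h1
    rw [hC] at h1
    nlinarith
  obtain ⟨y, ⟨g, hg, hg0, rfl⟩, hd⟩ := Metric.mem_closure_iff.1 hmem (r / 2) (by linarith)
  refine ⟨C, hC0, g, hg, hg0, ?_⟩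
  rw [aux_traj]
  rw [dist_eq_norm] at hd
  have : -(T b ψ) - Φ g = -(T b ψ + Φ g) := by abel
  rw [this, norm_neg] at hd
  exact hd.le

/-- continuing with the zero control -/
theorem aux_extend (T : ℝ → X →L[ℝ] X) (B : U →L[ℝ] X)
    (hTadd : ∀ s t : ℝ, 0 ≤ s → 0 ≤ t → T (s + t) = (T s).comp (T t))
    (hTcont : ∀ x : X, Continuous fun t => T t x)
    (hTcontr : ∀ t : ℝ, 0 ≤ t → ‖T t‖ ≤ 1) (ψ : X) {C : ℝ} {w : ℝ → U}
    (hw : GoodCtrl C w) {t t' : ℝ} (ht : 0 ≤ t) (htt : t ≤ t') (h0 : ∀ s, t < s → w s = 0) :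
    ‖traj T B ψ w t'‖ ≤ ‖traj T B ψ w t‖ := by
  have hE : traj T B ψ w t' = T (t' - t) (traj T B ψ w t) := by
    rw [aux_traj, aux_traj, map_add, ← ContinuousLinearMap.integral_comp_comm _
      (aux_int_s16 T B hTcont hTcontr hw t 0 t)]
    have h1 : T t' = (T (t' - t)).comp (T t) := by
      rw [← hTadd _ _ (by linarith) ht]; congr 1; ring
    congr 1
    · rw [h1]; rfl
    · rw [setIntegral_eq_of_subset_of_forall_sdiff_eq_zero measurableSet_Ioc
        (Set.Ioc_subset_Ioc_right htt)]
      · refine setIntegral_congr_fun measurableSet_Ioc fun σ hσ => ?_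
        rw [max_eq_left (by linarith [hσ.2]), max_eq_left (by linarith [hσ.2])]
        have h2 : T (t' - σ) = (T (t' - t)).comp (T (t - σ)) := by
          rw [← hTadd _ _ (by linarith) (by linarith [hσ.2])]; congr 1; ring
        rw [h2]; rfl
      · intro s hs
        have : t < s := by
          by_contra hc
          exact hs.2 ⟨hs.1.1, not_lt.1 hc⟩
        simp [h0 s this]
  rw [hE]
  have := (T (t' - t)).le_of_opNorm_le (hTcontr _ (by linarith)) (traj T B ψ w t)
  rwa [one_mul] at this

/-- extension by zero gives a globally good control -/
theorem aux_good {S : Set ℝ} (hS : MeasurableSet S) {C : ℝ} (hC : 0 ≤ C) {f : ℝ → U}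
    (hf : AEStronglyMeasurable f (volume.restrict S))
    (hb : ∀ᵐ t ∂volume.restrict S, ‖f t‖ ≤ C) : GoodCtrl C (S.indicator f) := by
  refine ⟨(aestronglyMeasurable_indicator_iff hS).2 hf, ?_⟩
  rw [ae_restrict_iff' hS] at hb
  filter_upwards [hb] with s hs
  by_cases h : s ∈ S
  · rw [Set.indicator_of_mem h]; exact hs h
  · rw [Set.indicator_of_notMem h, norm_zero]; exact hC

end aux

/-- (Duality of minimal time and minimal norm.) Under the same assumptions,
the minimal norm function `N*` restricted to `(0,τ̂)` and the minimal time function `τ*` are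
inverse to each other: `N*(τ*(M)) = M` for every `M > 0` and `τ*(N*(τ)) = τ` for every
`τ ∈ (0,τ̂)`. -/
theorem stmt16 {X U : Type*} [NormedAddCommGroup X] [InnerProductSpace ℝ X] [CompleteSpace X]
    [NormedAddCommGroup U] [InnerProductSpace ℝ U] [CompleteSpace U]
    (T : ℝ → X →L[ℝ] X) (B : U →L[ℝ] X)
    -- `T` is a `C₀`-semigroup of contractions (generated by `-A`)
    (hT0 : T 0 = 1)
    (hTadd : ∀ s t : ℝ, 0 ≤ s → 0 ≤ t → T (s + t) = (T s).comp (T t))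
    (hTcont : ∀ x : X, Continuous fun t => T t x)
    (hTcontr : ∀ t : ℝ, 0 ≤ t → ‖T t‖ ≤ 1)
    -- the `L¹` observability inequality `K(τ) ∫_0^τ ‖B*T*_t η‖ dt ≥ ‖T*_τ η‖`
    (K : ℝ → ℝ) (hK_pos : ∀ τ : ℝ, 0 < τ → 0 < K τ) (hK_cont : ContinuousOn K (Set.Ioi 0))
    (hobs : ∀ τ : ℝ, 0 < τ → ∀ η : X,
      ‖(T τ).adjoint η‖ ≤ K τ * ∫ t in Set.Ioc 0 τ, ‖B.adjoint ((T t).adjoint η)‖)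
    (r : ℝ) (hr : 0 < r) (ψ : X) (hψ : ψ ∉ Metric.closedBall (0 : X) r)
    -- `N*(τ)` is the minimal `L^∞`-norm of controls steering `ψ` into `B(0,r)` at time `τ`
    (Nstar : ℝ → ℝ)
    (hNstar : ∀ τ : ℝ, 0 < τ → IsLeast {C : ℝ | 0 ≤ C ∧ ∃ f : ℝ → U,
      AEStronglyMeasurable f (volume.restrict (Set.Ioo 0 τ)) ∧
      (∀ᵐ t ∂volume.restrict (Set.Ioo 0 τ), ‖f t‖ ≤ C) ∧
      traj T B ψ f τ ∈ Metric.closedBall (0 : X) r} (Nstar τ))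
    -- `τ*(M)` is the minimal time with controls bounded by `M`
    (τstar : ℝ → ℝ)
    (hτstar : ∀ M : ℝ, 0 < M → IsLeast {t : ℝ | 0 ≤ t ∧ ∃ u : ℝ → U,
      AEStronglyMeasurable u (volume.restrict (Set.Ioi 0)) ∧
      (∀ᵐ s ∂volume.restrict (Set.Ioi 0), ‖u s‖ ≤ M) ∧
      traj T B ψ u t ∈ Metric.closedBall (0 : X) r} (τstar M)) :
    (∀ M : ℝ, 0 < M → Nstar (τstar M) = M) ∧
      (∀ τ : ℝ, 0 < τ → (∀ s ∈ Set.Ioc (0 : ℝ) τ, r < ‖T s ψ‖) → τstar (Nstar τ) = τ) := by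
  have hψ' : r < ‖ψ‖ := by simpa using hψ
  have hpos : ∀ M : ℝ, 0 < M → 0 < τstar M := by
    intro M hM
    obtain ⟨⟨h0, u, -, -, hu⟩, -⟩ := hτstar M hM
    refine lt_of_le_of_ne h0 fun h => ?_
    rw [← h] at hu
    simp [traj, hT0] at hu
    linarith
  refine ⟨?_, ?_⟩
  · intro M hM
    have ht := hpos M hM
    obtain ⟨⟨-, u, hu1, hu2, hu3⟩, hmin⟩ := hτstar M hM
    set t := τstar M with ht_def
    have hsub : Set.Ioo 0 t ⊆ Set.Ioi 0 := fun x hx => hx.1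
    have hle : Nstar t ≤ M := (hNstar t ht).2 ⟨hM.le, u,
      hu1.mono_measure (Measure.restrict_mono hsub le_rfl),
      ae_restrict_of_ae_restrict_of_subset hsub hu2, hu3⟩
    refine le_antisymm hle ?_
    by_contra hlt
    rw [not_le] at hlt
    obtain ⟨⟨hN0, f, hf1, hf2, hf3⟩, -⟩ := hNstar t ht
    set N := Nstar t
    have hfg := aux_good measurableSet_Ioo hN0 hf1 hf2
    have hft : traj T B ψ ((Set.Ioo 0 t).indicator f) t = traj T B ψ f t :=
      aux_traj_congr T B ψ fun s hs => Set.indicator_of_mem hs _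
    set v := (Set.Ioo 0 t).indicator f
    obtain ⟨C, hC, g, hg, -, hgt⟩ := aux_control T B hT0 hTadd hTcont hTcontr K hK_pos hobs r hr
      ψ 0 t le_rfl ht
    -- mixing parameter
    obtain ⟨l, hl0, hl1, hlM⟩ : ∃ l : ℝ, 0 < l ∧ l ≤ 1 ∧ (1 - l) * N + l * C ≤ M := by
      refine ⟨(M - N) / (M - N + C), by apply div_pos <;> linarith, ?_, ?_⟩
      · rw [div_le_one (by linarith)]; linarith
      · have hd : 0 < M - N + C := by linarith
        have e : (M - N) / (M - N + C) * (M - N + C) = M - N := by field_simp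
        have p : 0 < (M - N) / (M - N + C) := by apply div_pos <;> linarith
        nlinarith
    have hwG : GoodCtrl M (fun s => (1 - l) • v s + l • g s) := by
      refine ⟨(hfg.1.const_smul (1 - l)).add (hg.1.const_smul l), ?_⟩
      filter_upwards [hfg.2, hg.2] with s h1 h2
      have h1l : 0 ≤ 1 - l := by linarith
      calc ‖(1 - l) • v s + l • g s‖ ≤ ‖(1 - l) • v s‖ + ‖l • g s‖ := norm_add_le _ _
        _ = (1 - l) * ‖v s‖ + l * ‖g s‖ := by
          rw [norm_smul, norm_smul, Real.norm_of_nonneg h1l, Real.norm_of_nonneg hl0.le]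
        _ ≤ (1 - l) * N + l * C := by gcongr
        _ ≤ M := hlM
    have hnorm : ‖traj T B ψ (fun s => (1 - l) • v s + l • g s) t‖ < r := by
      rw [aux_traj_comb T B hTcont hTcontr ψ hfg hg, hft]
      have h1l : 0 ≤ 1 - l := by linarith
      have hf3' : ‖traj T B ψ f t‖ ≤ r := by simpa using hf3
      calc _ ≤ ‖(1 - l) • traj T B ψ f t‖ + ‖l • traj T B ψ g t‖ := norm_add_le _ _
        _ = (1 - l) * ‖traj T B ψ f t‖ + l * ‖traj T B ψ g t‖ := by
          rw [norm_smul, norm_smul, Real.norm_of_nonneg h1l, Real.norm_of_nonneg hl0.le]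
        _ ≤ (1 - l) * r + l * (r / 2) := by gcongr
        _ < r := by nlinarith
    have hev := (aux_traj_tendsto T B hTcont hTcontr ψ hwG t).norm.eventually (gt_mem_nhds hnorm)
    have hev2 : ∀ᶠ s in nhdsWithin t (Set.Iio t), 0 < s := nhdsWithin_le_nhds (lt_mem_nhds ht)
    obtain ⟨s, ⟨hs1, hs2⟩, hs3⟩ := ((hev.and hev2).and self_mem_nhdsWithin).exists
    have := hmin ⟨hs2.le, _, hwG.1.restrict, ae_restrict_of_ae hwG.2, by simpa using hs1.le⟩
    exact absurd hs3 (not_lt.2 this)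
  · intro τ hτ hfree
    obtain ⟨⟨hN0, f, hf1, hf2, hf3⟩, hNmin⟩ := hNstar τ hτ
    set N := Nstar τ
    have hfg := aux_good measurableSet_Ioo hN0 hf1 hf2
    have hft : traj T B ψ ((Set.Ioo 0 τ).indicator f) τ = traj T B ψ f τ :=
      aux_traj_congr T B ψ fun s hs => Set.indicator_of_mem hs _
    have hNpos : 0 < N := by
      refine lt_of_le_of_ne hN0 fun h => ?_
      rw [← h] at hfg
      rw [← hft, aux_traj] at hf3
      have hz : ∫ σ in Set.Ioc 0 τ, T (max (τ - σ) 0) (B ((Set.Ioo 0 τ).indicator f σ)) = 0 := by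
        refine integral_eq_zero_of_ae (ae_restrict_of_ae ?_)
        filter_upwards [hfg.2] with s hs
        rw [norm_le_zero_iff.1 hs]
        simp
      rw [hz, add_zero] at hf3
      have h1 := hfree τ ⟨hτ, le_rfl⟩
      have h2 : ‖T τ ψ‖ ≤ r := by simpa using hf3
      linarith
    have ht0 := hpos N hNpos
    obtain ⟨⟨-, u, hu1, hu2, hu3⟩, hmin⟩ := hτstar N hNpos
    set t := τstar N
    have hle : t ≤ τ := hmin ⟨hτ.le, _, hfg.1.restrict, ae_restrict_of_ae hfg.2, by rwa [hft]⟩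
    refine le_antisymm hle ?_
    by_contra hlt
    rw [not_le] at hlt
    have hsub : Set.Ioo 0 t ⊆ Set.Ioi 0 := fun x hx => hx.1
    have hvG := aux_good measurableSet_Ioo hN0
      (hu1.mono_measure (Measure.restrict_mono hsub le_rfl))
      (ae_restrict_of_ae_restrict_of_subset hsub hu2)
    have hvt : traj T B ψ ((Set.Ioo 0 t).indicator u) t = traj T B ψ u t :=
      aux_traj_congr T B ψ fun s hs => Set.indicator_of_mem hs _
    have hv0 : ∀ s, t ≤ s → (Set.Ioo 0 t).indicator u s = 0 := fun s hs =>
      Set.indicator_of_notMem (fun h => absurd h.2 (not_lt.2 hs)) _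
    set v := (Set.Ioo 0 t).indicator u
    have hvτ : ‖traj T B ψ v τ‖ ≤ r := by
      refine (aux_extend T B hTadd hTcont hTcontr ψ hvG ht0.le hle
        fun s hs => hv0 s hs.le).trans ?_
      rw [hvt]; simpa using hu3
    obtain ⟨C, hC, g, hg, hg0, hgt⟩ := aux_control T B hT0 hTadd hTcont hTcontr K hK_pos hobs r hr
      ψ t τ ht0.le hlt
    obtain ⟨l, hl0, hl1, hlM⟩ : ∃ l : ℝ, 0 < l ∧ l ≤ 1 ∧ l * C ≤ (1 - l) * N := by
      have hd : 0 < N + C := by linarith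
      refine ⟨N / (N + C), by positivity, ?_, ?_⟩
      · rw [div_le_one hd]; linarith
      · have e : N / (N + C) * (N + C) = N := by field_simp
        nlinarith
    have h1l : 0 ≤ 1 - l := by linarith
    have hwG : GoodCtrl ((1 - l) * N) (fun s => (1 - l) • v s + l • g s) := by
      refine ⟨(hvG.1.const_smul (1 - l)).add (hg.1.const_smul l), ?_⟩
      filter_upwards [hvG.2, hg.2] with s h1 h2
      rcases le_or_gt s t with hs | hs
      · rw [hg0 s (fun h => absurd h.1 (not_lt.2 hs)), smul_zero, add_zero, norm_smul,
          Real.norm_of_nonneg h1l]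
        gcongr
      · rw [hv0 s hs.le, smul_zero, zero_add, norm_smul, Real.norm_of_nonneg hl0.le]
        exact (mul_le_mul_of_nonneg_left h2 hl0.le).trans hlM
    have hnorm : ‖traj T B ψ (fun s => (1 - l) • v s + l • g s) τ‖ ≤ r := by
      rw [aux_traj_comb T B hTcont hTcontr ψ hvG hg]
      calc _ ≤ ‖(1 - l) • traj T B ψ v τ‖ + ‖l • traj T B ψ g τ‖ := norm_add_le _ _
        _ = (1 - l) * ‖traj T B ψ v τ‖ + l * ‖traj T B ψ g τ‖ := by
          rw [norm_smul, norm_smul, Real.norm_of_nonneg h1l, Real.norm_of_nonneg hl0.le]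
        _ ≤ (1 - l) * r + l * (r / 2) := by gcongr
        _ ≤ r := by nlinarith
    have := hNmin ⟨by positivity, _, hwG.1.restrict, ae_restrict_of_ae hwG.2,
      by simpa using hnorm⟩
    nlinarith
end
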